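/- arXiv:1401.6542 — 2 statements merged into one kernel-verified Lean document; each statement's English description precedes it below -/
import Mathlib

section
/- Let m > 2 be a real number and C₀ > 0. Let (X, d) be a proper metric space equipped with a Borel measure μ such that μ(B(y, r)) ≤ C₀·r^m for every y ∈ X and every radius 0 < r ≤ 1. Let Z ⊆ X be a closed subset whose (m−2)-dimensional Hausdorff measure vanishes, 𝓗^{m−2}(Z) = 0. Let f : X → ℝ be a measurable function with 0 ≤ f ≤ 1 on X and ∫_X f dμ ≤ 1. Then for every point x ∈ X and all η > 0, δ > 0, there exist a real number δ₁ with 0 < δ₁ ≤ δ and a Lipschitz function β : X → [0, 1] such that: (i) β vanishes outside B(x, 1/δ₁) \ Z_{δ₁}; (ii) β ≡ 1 on B(x, 1/δ) \ Z_{δ}; and (iii) ∫_X f · (Lip β)² dμ ≤ η. -/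
open MeasureTheory Metric NNReal

/-- The pointwise Lipschitz constant `Lip β(z) = limsup_{w → z} |β(w) − β(z)| / d(w, z)`. -/
noncomputable def pointwiseLip {X : Type*} [MetricSpace X] (β : X → ℝ) (z : X) : ℝ :=
  Filter.limsup (fun w => |β w - β z| / dist w z) (nhdsWithin z {z}ᶜ)

/-!
Choose a wide outer ball and cover the part of `Z` in it by finitely many balls `B(zᵢ, rᵢ)` with
`∑ rᵢ ^ (m - 2)` as small as we like. Let `β` be the minimum of a cutoff to the outer ball and of
cutoffs that vanish on `B(zᵢ, rᵢ)` and are `1` off `B(zᵢ, 2rᵢ)`. At each point the Lipschitz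
constant of a minimum is at most that of one of its terms, so the energy of `β` is at most the sum
of the energies. The outer cutoff has a small Lipschitz constant and `f` is integrable; the `i`-th
inner cutoff has energy at most a multiple of `rᵢ ^ (-2) * μ B(zᵢ, 3rᵢ)`, that is, of
`rᵢ ^ (m - 2)`.
-/

open Filter
open scoped ENNReal Topology

section PointwiseLip

variable {X : Type*} [MetricSpace X] {β γ : X → ℝ} {z : X}

theorem pointwiseLip_eq_zero_of_nhdsNE_eq_bot (hz : 𝓝[≠] z = ⊥) : pointwiseLip β z = 0 := by
  simp [pointwiseLip, hz, limsup_eq]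

theorem pointwiseLip_nonneg : 0 ≤ pointwiseLip β z := by
  rcases eq_or_neBot (𝓝[≠] z) with hz | hz
  · exact (pointwiseLip_eq_zero_of_nhdsNE_eq_bot hz).ge
  · rw [pointwiseLip, limsup_eq]
    refine Real.sInf_nonneg fun a ha => ?_
    obtain ⟨w, hw⟩ := Eventually.exists (Set.mem_ofPred_eq ▸ ha)
    exact (div_nonneg (abs_nonneg _) dist_nonneg).trans hw

theorem pointwiseLip_le_of_eventually {c : ℝ} (hc : 0 ≤ c)
    (h : ∀ᶠ w in 𝓝 z, |β w - β z| ≤ c * dist w z) : pointwiseLip β z ≤ c := by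
  rcases eq_or_neBot (𝓝[≠] z) with hz | hz
  · exact (pointwiseLip_eq_zero_of_nhdsNE_eq_bot hz).trans_le hc
  · have hbdd : (𝓝[≠] z).IsBoundedUnder (· ≥ ·) fun w => |β w - β z| / dist w z :=
      isBoundedUnder_of ⟨0, fun w => by positivity⟩
    refine limsup_le_of_le hbdd.isCoboundedUnder_le ?_
    filter_upwards [h.filter_mono nhdsWithin_le_nhds, self_mem_nhdsWithin] with w hw hwz
    rwa [div_le_iff₀ (dist_pos.2 hwz)]

theorem pointwiseLip_le_of_lipschitzWith {K : ℝ≥0} (hβ : LipschitzWith K β) :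
    pointwiseLip β z ≤ K :=
  pointwiseLip_le_of_eventually K.2 (.of_forall fun w => hβ.dist_le_mul w z)

theorem pointwiseLip_eq_zero_of_eventually_eq (h : ∀ᶠ w in 𝓝 z, β w = β z) :
    pointwiseLip β z = 0 :=
  (pointwiseLip_le_of_eventually le_rfl (h.mono fun w hw => by simp [hw])).antisymm
    pointwiseLip_nonneg

theorem eventually_abs_sub_le_of_pointwiseLip_lt {K : ℝ≥0} (hβ : LipschitzWith K β) {c : ℝ}
    (h : pointwiseLip β z < c) : ∀ᶠ w in 𝓝 z, |β w - β z| ≤ c * dist w z := by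
  have hbdd : (𝓝[≠] z).IsBoundedUnder (· ≤ ·) fun w => |β w - β z| / dist w z :=
    isBoundedUnder_of ⟨K, fun w => div_le_of_le_mul₀ dist_nonneg K.2 (hβ.dist_le_mul w z)⟩
  filter_upwards [eventually_nhdsWithin_iff.1 (eventually_lt_of_limsup_lt h hbdd)] with w hw
  rcases eq_or_ne w z with rfl | hwz
  · simp
  · exact ((div_lt_iff₀ (dist_pos.2 hwz)).1 (hw hwz)).le

theorem pointwiseLip_inf_le {K K' : ℝ≥0} (hβ : LipschitzWith K β) (hγ : LipschitzWith K' γ) :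
    pointwiseLip (β ⊓ γ) z ≤ max (pointwiseLip β z) (pointwiseLip γ z) := by
  refine le_of_forall_gt_imp_ge_of_dense fun c hc => ?_
  obtain ⟨hβc, hγc⟩ := max_lt_iff.1 hc
  refine pointwiseLip_le_of_eventually (pointwiseLip_nonneg.trans hβc.le) ?_
  filter_upwards [eventually_abs_sub_le_of_pointwiseLip_lt hβ hβc,
    eventually_abs_sub_le_of_pointwiseLip_lt hγ hγc] with w hβw hγw
  exact (abs_min_sub_min_le_max _ _ _ _).trans (max_le hβw hγw)

theorem exists_lipschitzWith_inf' {X ι : Type*} [PseudoEMetricSpace X] {T : Finset ι}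
    {b : ι → X → ℝ} (hT : T.Nonempty) (hb : ∀ i ∈ T, ∃ K, LipschitzWith K (b i)) :
    ∃ K, LipschitzWith K (T.inf' hT b) :=
  Finset.inf'_induction hT b (p := fun β => ∃ K, LipschitzWith K β)
    (fun _ ⟨_, h⟩ _ ⟨_, h'⟩ => ⟨_, h.min h'⟩) hb

theorem exists_pointwiseLip_inf'_le {ι : Type*} {T : Finset ι} {b : ι → X → ℝ} (hT : T.Nonempty)
    (hb : ∀ i ∈ T, ∃ K, LipschitzWith K (b i)) :
    ∃ i ∈ T, pointwiseLip (T.inf' hT b) z ≤ pointwiseLip (b i) z := by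
  refine (Finset.inf'_induction hT b (p := fun β => (∃ K, LipschitzWith K β) ∧
    ∃ i ∈ T, pointwiseLip β z ≤ pointwiseLip (b i) z) ?_ fun i hi => ⟨hb i hi, i, hi, le_rfl⟩).2
  rintro β ⟨⟨K, hβ⟩, i, hi, hβi⟩ γ ⟨⟨K', hγ⟩, j, hj, hγj⟩
  refine ⟨⟨_, hβ.min hγ⟩, ?_⟩
  rcases le_max_iff.1 (pointwiseLip_inf_le (z := z) hβ hγ) with h | h
  · exact ⟨i, hi, h.trans hβi⟩
  · exact ⟨j, hj, h.trans hγj⟩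

theorem ofReal_mul_pointwiseLip_sq (a : ℝ) :
    ENNReal.ofReal (a * pointwiseLip β z ^ 2) =
      ENNReal.ofReal a * ENNReal.ofReal (pointwiseLip β z) ^ (2 : ℝ) := by
  rw [ENNReal.ofReal_mul' (sq_nonneg _), ENNReal.ofReal_pow pointwiseLip_nonneg, ENNReal.rpow_two]

end PointwiseLip

section ThickenedIndicator

theorem lipschitzWith_coe_thickenedIndicator {X : Type*} [PseudoEMetricSpace X] {δ : ℝ} (hδ : 0 < δ)
    (E : Set X) : LipschitzWith δ.toNNReal⁻¹ fun y => (thickenedIndicator hδ E y : ℝ) :=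
  fun y w => lipschitzWith_thickenedIndicator hδ E y w

theorem thickenedIndicator_compl_ball_eq_zero {X : Type*} [PseudoMetricSpace X] {r : ℝ} (hr : 0 < r)
    {y z : X} (hy : y ∈ ball z r) : thickenedIndicator hr (ball z (2 * r))ᶜ y = 0 := by
  refine thickenedIndicator_zero hr _ fun hmem => ?_
  obtain ⟨w, hw, hyw⟩ := mem_thickening_iff.1 hmem
  have hwz : 2 * r ≤ dist w z := by simpa using hw
  linarith [dist_triangle_left w z y, mem_ball.1 hy]

variable {X : Type*} [MetricSpace X] {δ p : ℝ} {E : Set X} {z : X}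

theorem pointwiseLip_thickenedIndicator_le (hδ : 0 < δ) :
    pointwiseLip (fun y => (thickenedIndicator hδ E y : ℝ)) z ≤ δ⁻¹ := by
  simpa [hδ.le] using pointwiseLip_le_of_lipschitzWith (lipschitzWith_coe_thickenedIndicator hδ E)

theorem pointwiseLip_thickenedIndicator_eq_zero (hδ : 0 < δ) (hz : z ∈ interior E) :
    pointwiseLip (fun y => (thickenedIndicator hδ E y : ℝ)) z = 0 := by
  refine pointwiseLip_eq_zero_of_eventually_eq ?_
  filter_upwards [mem_interior_iff_mem_nhds.1 hz] with w hw
  rw [thickenedIndicator_one hδ E hw, thickenedIndicator_one hδ E (interior_subset hz)]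

theorem ofReal_pointwiseLip_thickenedIndicator_rpow_le (hδ : 0 < δ) (hp : 0 < p) :
    ENNReal.ofReal (pointwiseLip (fun y => (thickenedIndicator hδ E y : ℝ)) z) ^ p ≤
      (closure Eᶜ).indicator (fun _ => ENNReal.ofReal δ ^ (-p)) z := by
  by_cases hz : z ∈ interior E
  · rw [pointwiseLip_thickenedIndicator_eq_zero hδ hz, ENNReal.ofReal_zero,
      ENNReal.zero_rpow_of_pos hp]
    exact zero_le
  · rw [Set.indicator_of_mem (by rwa [closure_compl]), ENNReal.rpow_neg, ← ENNReal.inv_rpow,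
      ← ENNReal.ofReal_inv_of_pos hδ]
    gcongr
    exact pointwiseLip_thickenedIndicator_le hδ

end ThickenedIndicator

section InfThickenedIndicator

variable {X ι : Type*} [PseudoEMetricSpace X] [Fintype ι] [Nonempty ι] {ρ : ι → ℝ}
  (hρ : ∀ i, 0 < ρ i) (E : ι → Set X)

/-- The cutoff to `⋂ i, E i` that falls off from `1` to `0` over distance `ρ i` outside `E i`: the
minimum of the thickened indicators of the `E i`. -/
noncomputable def infThickenedIndicator : X → ℝ :=
  Finset.univ.inf' Finset.univ_nonempty fun i y => (thickenedIndicator (hρ i) (E i) y : ℝ)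

namespace infThickenedIndicator

theorem exists_lipschitzWith : ∃ K, LipschitzWith K (infThickenedIndicator hρ E) :=
  exists_lipschitzWith_inf' _ fun i _ => ⟨_, lipschitzWith_coe_thickenedIndicator (hρ i) (E i)⟩

theorem le_apply (y : X) (i : ι) :
    infThickenedIndicator hρ E y ≤ thickenedIndicator (hρ i) (E i) y := by
  rw [infThickenedIndicator, Finset.inf'_apply]
  exact Finset.inf'_le _ (Finset.mem_univ i)

theorem nonneg (y : X) : 0 ≤ infThickenedIndicator hρ E y := by
  rw [infThickenedIndicator, Finset.inf'_apply]
  exact Finset.le_inf' _ _ fun i _ => NNReal.coe_nonneg _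

theorem le_one (y : X) : infThickenedIndicator hρ E y ≤ 1 :=
  (le_apply hρ E y (Classical.arbitrary ι)).trans
    (by exact_mod_cast thickenedIndicator_le_one _ _ y)

variable {E} {y : X}

theorem eq_zero {i : ι} (hy : thickenedIndicator (hρ i) (E i) y = 0) :
    infThickenedIndicator hρ E y = 0 :=
  le_antisymm (by simpa [hy] using le_apply hρ E y i) (nonneg hρ E y)

theorem eq_one (hy : ∀ i, y ∈ E i) : infThickenedIndicator hρ E y = 1 := by
  refine (le_one hρ E y).antisymm ?_
  rw [infThickenedIndicator, Finset.inf'_apply]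
  exact Finset.le_inf' _ _ fun i _ => by simp [thickenedIndicator_one (hρ i) (E i) (hy i)]

variable {X : Type*} [MetricSpace X] {E : ι → Set X} {y : X} {p : ℝ}

theorem ofReal_pointwiseLip_rpow_le (hp : 0 < p) :
    ENNReal.ofReal (pointwiseLip (infThickenedIndicator hρ E) y) ^ p ≤
      ∑ i, (closure (E i)ᶜ).indicator (fun _ => ENNReal.ofReal (ρ i) ^ (-p)) y := by
  obtain ⟨i, hi, hle⟩ := exists_pointwiseLip_inf'_le (z := y) Finset.univ_nonempty
    fun i _ => ⟨_, lipschitzWith_coe_thickenedIndicator (hρ i) (E i)⟩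
  calc ENNReal.ofReal (pointwiseLip (infThickenedIndicator hρ E) y) ^ p
    _ ≤ ENNReal.ofReal (pointwiseLip (fun y => (thickenedIndicator (hρ i) (E i) y : ℝ)) y) ^ p :=
        ENNReal.rpow_le_rpow (ENNReal.ofReal_le_ofReal hle) hp.le
    _ ≤ (closure (E i)ᶜ).indicator (fun _ => ENNReal.ofReal (ρ i) ^ (-p)) y :=
        ofReal_pointwiseLip_thickenedIndicator_rpow_le (hρ i) hp
    _ ≤ ∑ i, (closure (E i)ᶜ).indicator (fun _ => ENNReal.ofReal (ρ i) ^ (-p)) y :=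
        Finset.single_le_sum
          (f := fun i => (closure (E i)ᶜ).indicator (fun _ => ENNReal.ofReal (ρ i) ^ (-p)) y)
          (fun _ _ => zero_le) hi

theorem lintegral_mul_pointwiseLip_rpow_le [MeasurableSpace X] [OpensMeasurableSpace X]
    {μ : Measure X} {f : X → ℝ≥0∞} (hf : AEMeasurable f μ) (hp : 0 < p) :
    ∫⁻ y, f y * ENNReal.ofReal (pointwiseLip (infThickenedIndicator hρ E) y) ^ p ∂μ ≤
      ∑ i, ENNReal.ofReal (ρ i) ^ (-p) * ∫⁻ y in closure (E i)ᶜ, f y ∂μ := by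
  have hmeas (i : ι) : MeasurableSet (closure (E i)ᶜ) := isClosed_closure.measurableSet
  have hfi (i : ι) : AEMeasurable ((closure (E i)ᶜ).indicator f) μ := hf.indicator (hmeas i)
  calc ∫⁻ y, f y * ENNReal.ofReal (pointwiseLip (infThickenedIndicator hρ E) y) ^ p ∂μ
    _ ≤ ∫⁻ y,
        f y * ∑ i, (closure (E i)ᶜ).indicator (fun _ => ENNReal.ofReal (ρ i) ^ (-p)) y ∂μ := by
        gcongr with y
        exact ofReal_pointwiseLip_rpow_le hρ hp
    _ = ∫⁻ y, ∑ i, ENNReal.ofReal (ρ i) ^ (-p) * (closure (E i)ᶜ).indicator f y ∂μ := by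
        congr with y
        rw [Finset.mul_sum]
        congr with i
        by_cases hy : y ∈ closure (E i)ᶜ <;> simp only [hy, Set.indicator_of_mem,
          Set.indicator_of_notMem, not_false_eq_true, mul_comm, mul_zero]
    _ = ∑ i, ENNReal.ofReal (ρ i) ^ (-p) * ∫⁻ y in closure (E i)ᶜ, f y ∂μ := by
        rw [lintegral_finsetSum' _ fun i _ => (hfi i).const_mul _]
        congr with i
        rw [lintegral_const_mul'' _ (hfi i), lintegral_indicator (hmeas i)]

end infThickenedIndicator

end InfThickenedIndicator

section Covering

theorem exists_lt_ofReal_rpow_le_add {s : ℝ} (hs : 0 ≤ s) {D : ℝ≥0∞} {r₀ : ℝ}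
    (hD : D < ENNReal.ofReal r₀) {e : ℝ≥0∞} (he : e ≠ 0) :
    ∃ r, 0 < r ∧ r ≤ r₀ ∧ D < ENNReal.ofReal r ∧ ENNReal.ofReal r ^ s ≤ D ^ s + e := by
  have hlt : D ^ s < D ^ s + e :=
    ENNReal.lt_add_right (ENNReal.rpow_ne_top_of_nonneg hs hD.ne_top) he
  have hnhds : ∀ᶠ u in 𝓝[>] D, u ^ s < D ^ s + e :=
    (ENNReal.continuous_rpow_const.continuousAt.eventually_lt_const hlt).filter_mono
      nhdsWithin_le_nhds
  have : (𝓝[>] D).NeBot := nhdsGT_neBot_of_exists_gt ⟨_, hD⟩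
  obtain ⟨u, hus, hDu, hur⟩ := (hnhds.and (Ioo_mem_nhdsGT hD)).exists
  have hu : ENNReal.ofReal u.toReal = u := ENNReal.ofReal_toReal hur.ne_top
  refine ⟨u.toReal, ENNReal.toReal_pos (pos_of_gt hDu).ne' hur.ne_top, ?_, by rwa [hu],
    by rw [hu]; exact hus.le⟩
  exact ENNReal.toReal_le_of_le_ofReal (ENNReal.ofReal_pos.1 (pos_of_gt hD)).le hur.le

theorem exists_cover_tsum_ediam_rpow_lt {X : Type*} [EMetricSpace X] [MeasurableSpace X]
    [BorelSpace X] {s : ℝ} {K : Set X} {ε r : ℝ≥0∞} (hK : μH[s] K < ε) (hr : 0 < r) :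
    ∃ t : ℕ → Set X, K ⊆ ⋃ n, t n ∧ (∀ n, ediam (t n) ≤ r) ∧
      ∑' n, ⨆ _ : (t n).Nonempty, ediam (t n) ^ s < ε := by
  rw [Measure.hausdorffMeasure_apply] at hK
  simpa only [iInf_lt_iff, exists_prop] using (le_iSup₂ r hr).trans_lt hK

variable {X : Type*} [MetricSpace X] [MeasurableSpace X] [BorelSpace X] {s r₀ : ℝ} {K : Set X}
  {ε : ℝ≥0∞}

theorem exists_countable_ball_cover_tsum_rpow_lt (hs : 0 ≤ s) (hK : μH[s] K < ε) (hr₀ : 0 < r₀) :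
    ∃ (I : Set ℕ) (z : I → X) (r : I → ℝ), (∀ i, z i ∈ K) ∧ (∀ i, 0 < r i ∧ r i ≤ r₀) ∧
      K ⊆ ⋃ i, ball (z i) (r i) ∧ ∑' i, ENNReal.ofReal (r i) ^ s < ε := by
  obtain ⟨ε', hKε', hε'⟩ := exists_between hK
  obtain ⟨t, hKt, htr, hsum⟩ :=
    exists_cover_tsum_ediam_rpow_lt hKε' (ENNReal.ofReal_pos.2 (half_pos hr₀))
  obtain ⟨e, he, hesum⟩ := ENNReal.exists_pos_sum_of_countable' (tsub_pos_of_lt hε').ne' ℕ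
  let I : Set ℕ := {n | (t n ∩ K).Nonempty}
  choose z hzt hzK using fun n : I => n.2
  have hdiam (n : I) : ediam (t n) < ENNReal.ofReal r₀ :=
    (htr n).trans_lt ((ENNReal.ofReal_lt_ofReal_iff hr₀).2 (half_lt_self hr₀))
  choose r hr hrr₀ hdr hrs using fun n : I => exists_lt_ofReal_rpow_le_add hs (hdiam n) (he n).ne'
  refine ⟨I, z, r, hzK, fun n => ⟨hr n, hrr₀ n⟩, fun y hy => ?_, ?_⟩
  · obtain ⟨n, hn⟩ := Set.mem_iUnion.1 (hKt hy)
    let k : I := ⟨n, y, hn, hy⟩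
    refine Set.mem_iUnion.2 ⟨k, ?_⟩
    rw [mem_ball, ← edist_lt_ofReal]
    exact (edist_le_ediam_of_mem hn (hzt k)).trans_lt (hdr k)
  · calc ∑' n : I, ENNReal.ofReal (r n) ^ s
      _ ≤ ∑' n : I, ((⨆ _ : (t n).Nonempty, ediam (t n) ^ s) + e n) :=
          ENNReal.tsum_le_tsum fun n => by rw [ciSup_pos ⟨z n, hzt n⟩]; exact hrs n
      _ ≤ ∑' n, ((⨆ _ : (t n).Nonempty, ediam (t n) ^ s) + e n) :=
          ENNReal.tsum_comp_le_tsum_of_injective Subtype.val_injective _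
      _ = (∑' n, ⨆ _ : (t n).Nonempty, ediam (t n) ^ s) + ∑' n, e n := ENNReal.tsum_add
      _ < ε' + (ε - ε') := ENNReal.add_lt_add hsum hesum
      _ = ε := add_tsub_cancel_of_le hε'.le

theorem exists_finite_ball_cover_sum_rpow_lt (hs : 0 ≤ s) (hKc : IsCompact K) (hK : μH[s] K < ε)
    (hr₀ : 0 < r₀) :
    ∃ (ι : Type) (_ : Fintype ι) (z : ι → X) (r : ι → ℝ), (∀ i, z i ∈ K) ∧
      (∀ i, 0 < r i ∧ r i ≤ r₀) ∧ K ⊆ ⋃ i, ball (z i) (r i) ∧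
      ∑ i, ENNReal.ofReal (r i) ^ s < ε := by
  obtain ⟨I, z, r, hz, hr, hcov, hsum⟩ := exists_countable_ball_cover_tsum_rpow_lt hs hK hr₀
  obtain ⟨T, hT⟩ := hKc.elim_finite_subcover _ (fun i => isOpen_ball) hcov
  refine ⟨T, inferInstance, fun i => z i, fun i => r i, fun i => hz i, fun i => hr i, ?_, ?_⟩
  · rwa [Set.iUnion_subtype]
  · rw [Finset.sum_coe_sort T fun i => ENNReal.ofReal (r i) ^ s]
    exact (ENNReal.sum_le_tsum T).trans_lt hsum

end Covering

section Estimates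

theorem exists_pos_ofReal_rpow_neg_mul_le {p : ℝ} (hp : 0 < p) {a ε : ℝ≥0∞} (ha : a ≠ ⊤)
    (hε : ε ≠ 0) : ∃ L : ℝ, 0 < L ∧ ENNReal.ofReal L ^ (-p) * a ≤ ε := by
  have hlim : Tendsto (fun L => ENNReal.ofReal L ^ (-p) * a) atTop (𝓝 0) := by
    have htop := (ENNReal.tendsto_rpow_at_top hp).comp ENNReal.tendsto_ofReal_atTop
    simpa [ENNReal.rpow_neg] using
      ENNReal.Tendsto.mul_const (tendsto_inv_iff.2 htop) (Or.inr ha)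
  obtain ⟨L, hLpos, hL⟩ :=
    ((eventually_gt_atTop 0).and (hlim.eventually_lt_const (pos_of_ne_zero hε))).exists
  exact ⟨L, hLpos, hL.le⟩

variable {X : Type*} [PseudoMetricSpace X]

theorem ofReal_rpow_neg_mul_setLIntegral_closure_ball_le [MeasurableSpace X]
    {μ : Measure X} {f : X → ℝ≥0∞} {M C : ℝ≥0∞} (hf : ∀ᵐ y ∂μ, f y ≤ M) {m p r : ℝ} (hr : 0 < r)
    {z : X} (hball : μ (ball z (3 * r)) ≤ C * ENNReal.ofReal (3 * r) ^ m) :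
    ENNReal.ofReal r ^ (-p) * ∫⁻ y in closure (ball z (2 * r)), f y ∂μ ≤
      M * C * 3 ^ m * ENNReal.ofReal r ^ (m - p) := by
  have hsub : closure (ball z (2 * r)) ⊆ ball z (3 * r) :=
    closure_ball_subset_closedBall.trans (closedBall_subset_ball (by linarith))
  have hr0 : ENNReal.ofReal r ≠ 0 := (ENNReal.ofReal_pos.2 hr).ne'
  calc ENNReal.ofReal r ^ (-p) * ∫⁻ y in closure (ball z (2 * r)), f y ∂μ
    _ ≤ ENNReal.ofReal r ^ (-p) * ∫⁻ _ in closure (ball z (2 * r)), M ∂μ := by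
        gcongr 1
        exact lintegral_mono_ae (ae_restrict_of_ae hf)
    _ ≤ ENNReal.ofReal r ^ (-p) * (M * (C * ENNReal.ofReal (3 * r) ^ m)) := by
        rw [setLIntegral_const]
        gcongr
        exact (measure_mono hsub).trans hball
    _ = M * C * 3 ^ m * ENNReal.ofReal r ^ (m - p) := by
        rw [ENNReal.ofReal_mul zero_le_three, ENNReal.ofReal_ofNat,
          ENNReal.mul_rpow_of_ne_top ENNReal.ofNat_ne_top ENNReal.ofReal_ne_top, sub_eq_neg_add,
          ENNReal.rpow_add _ _ hr0 ENNReal.ofReal_ne_top]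
        ring

theorem exists_pos_forall_infDist_le_mem_of_isOpen {Z U : Set X} (hZ : Z.Nonempty) {x : X} {R : ℝ}
    (hK : IsCompact (Z ∩ closedBall x (R + 1))) (hU : IsOpen U)
    (hKU : Z ∩ closedBall x (R + 1) ⊆ U) :
    ∃ δ, 0 < δ ∧ ∀ y ∈ ball x R, infDist y Z ≤ δ → y ∈ U := by
  obtain ⟨δ, hδ, hδU⟩ := hK.exists_cthickening_subset_open hU hKU
  refine ⟨min δ 1 / 2, by positivity, fun y hy hyZ => hδU ?_⟩
  obtain ⟨q, hqZ, hyq⟩ := (infDist_lt_iff hZ).1 (hyZ.trans_lt (half_lt_self (by positivity)))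
  obtain ⟨hyqδ, hyq1⟩ := lt_min_iff.1 hyq
  refine mem_cthickening_of_dist_le y q δ _ ⟨hqZ, mem_closedBall.2 ?_⟩ hyqδ.le
  linarith [dist_triangle_left q x y, mem_ball.1 hy]

end Estimates

section PuncturedBallCutoff

variable {X ι : Type*} [PseudoMetricSpace X] [Fintype ι] (x : X) (R : ℝ) {L : ℝ} (hL : 0 < L)
  (z : ι → X) {r : ι → ℝ} (hr : ∀ i, 0 < r i)

/-- The cutoff to `ball x R \ ⋃ i, ball (z i) (2 * r i)` that vanishes outside `ball x (R + L)` and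
on every `ball (z i) (r i)`. The index `none` stands for the outer ball. -/
noncomputable def puncturedBallCutoff : X → ℝ :=
  infThickenedIndicator (ρ := fun o => o.elim L r) (Option.forall.2 ⟨hL, hr⟩)
    fun o => o.elim (ball x R) fun i => (ball (z i) (2 * r i))ᶜ

namespace puncturedBallCutoff

variable {x R z} {y : X}

theorem eq_zero_of_add_le_dist (hy : R + L ≤ dist y x) :
    puncturedBallCutoff x R hL z hr y = 0 := by
  refine infThickenedIndicator.eq_zero _ (i := none) (thickenedIndicator_zero hL _ fun hmem => ?_)
  linarith [mem_ball.1 (thickening_ball x L R hmem)]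

theorem eq_zero_of_mem_iUnion (hy : y ∈ ⋃ i, ball (z i) (r i)) :
    puncturedBallCutoff x R hL z hr y = 0 := by
  obtain ⟨i, hi⟩ := Set.mem_iUnion.1 hy
  exact infThickenedIndicator.eq_zero _ (i := some i)
    (thickenedIndicator_compl_ball_eq_zero (hr i) hi)

theorem eq_zero_of_notMem_diff {Z : Set X} {δ : ℝ} (hRL : R + L ≤ 1 / δ)
    (hnear : ∀ q ∈ ball x (R + L), infDist q Z ≤ δ → q ∈ ⋃ i, ball (z i) (r i))
    (hy : y ∉ ball x (1 / δ) \ {q | infDist q Z ≤ δ}) : puncturedBallCutoff x R hL z hr y = 0 := by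
  rcases le_or_gt (R + L) (dist y x) with hfar | hyx
  · exact eq_zero_of_add_le_dist hL hr hfar
  · have hyZ : infDist y Z ≤ δ := by_contra fun h => hy ⟨mem_ball.2 (hyx.trans_le hRL), h⟩
    exact eq_zero_of_mem_iUnion hL hr (hnear y hyx hyZ)

theorem eq_one_of_lt_infDist {Z : Set X} {δ : ℝ} (hz : ∀ i, z i ∈ Z) (hrδ : ∀ i, r i ≤ δ / 2)
    (hy : y ∈ ball x R) (hyZ : δ < infDist y Z) : puncturedBallCutoff x R hL z hr y = 1 := by
  refine infThickenedIndicator.eq_one _ (Option.forall.2 ⟨hy, fun i hi => ?_⟩)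
  linarith [infDist_le_dist_of_mem (x := y) (hz i), mem_ball.1 hi, hrδ i]

theorem lintegral_mul_pointwiseLip_rpow_le {X : Type*} [MetricSpace X] [MeasurableSpace X]
    [OpensMeasurableSpace X] {x : X} {R : ℝ} {z : ι → X}
    {μ : Measure X} {f : X → ℝ≥0∞} (hf : AEMeasurable f μ) {M C : ℝ≥0∞} (hfM : ∀ᵐ y ∂μ, f y ≤ M)
    {m p : ℝ} (hp : 0 < p)
    (hball : ∀ i, μ (ball (z i) (3 * r i)) ≤ C * ENNReal.ofReal (3 * r i) ^ m) :
    ∫⁻ y, f y * ENNReal.ofReal (pointwiseLip (puncturedBallCutoff x R hL z hr) y) ^ p ∂μ ≤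
      ENNReal.ofReal L ^ (-p) * ∫⁻ y, f y ∂μ +
        M * C * 3 ^ m * ∑ i, ENNReal.ofReal (r i) ^ (m - p) := by
  refine (infThickenedIndicator.lintegral_mul_pointwiseLip_rpow_le _ hf hp).trans ?_
  rw [Fintype.sum_option, Finset.mul_sum]
  simp only [Option.elim_none, Option.elim_some, compl_compl]
  exact add_le_add (by gcongr; exact Measure.restrict_le_self) (Finset.sum_le_sum fun i _ =>
    ofReal_rpow_neg_mul_setLIntegral_closure_ball_le hfM (hr i) (hball i))

theorem exists_cover_lintegral_mul_pointwiseLip_rpow_le {X : Type*} [MetricSpace X]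
    [MeasurableSpace X] [BorelSpace X] {x : X} {R : ℝ} {μ : Measure X} {f : X → ℝ≥0∞}
    (hf : AEMeasurable f μ) {M C : ℝ≥0} (hfM : ∀ᵐ y ∂μ, f y ≤ M) {m p : ℝ} (hp : 0 < p)
    (hpm : p ≤ m) {K : Set X}
    (hvol : ∀ y ∈ K, ∀ r : ℝ, 0 < r → r ≤ 1 → μ (ball y r) ≤ C * ENNReal.ofReal r ^ m)
    (hKc : IsCompact K) (hK : μH[m - p] K = 0) {r₀ : ℝ} (hr₀ : 0 < r₀) {ε : ℝ≥0∞} (hε : ε ≠ 0) :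
    ∃ (ι : Type) (_ : Fintype ι) (z : ι → X) (r : ι → ℝ) (hr : ∀ i, 0 < r i),
      (∀ i, z i ∈ K) ∧ (∀ i, r i ≤ r₀) ∧ K ⊆ ⋃ i, ball (z i) (r i) ∧
      ∫⁻ y, f y * ENNReal.ofReal (pointwiseLip (puncturedBallCutoff x R hL z hr) y) ^ p ∂μ ≤
        ENNReal.ofReal L ^ (-p) * ∫⁻ y, f y ∂μ + ε := by
  have hA : (M * C * 3 ^ m : ℝ≥0∞) ≠ ⊤ := by finiteness
  obtain ⟨ι, _, z, r, hz, hr, hcov, hsum⟩ := exists_finite_ball_cover_sum_rpow_lt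
    (sub_nonneg.2 hpm) hKc (hK.trans_lt (ENNReal.div_pos hε hA)) (r₀ := min (1 / 3) r₀)
    (by positivity)
  have hr3 (i : ι) : r i ≤ 1 / 3 := (hr i).2.trans (min_le_left _ _)
  have hball (i : ι) : μ (ball (z i) (3 * r i)) ≤ C * ENNReal.ofReal (3 * r i) ^ m :=
    hvol _ (hz i) _ (by linarith [(hr i).1]) (by linarith [hr3 i])
  refine ⟨ι, _, z, r, fun i => (hr i).1, hz, fun i => (hr i).2.trans (min_le_right _ _), hcov,
    (lintegral_mul_pointwiseLip_rpow_le hL _ hf hfM hp hball).trans ?_⟩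
  gcongr
  exact (mul_le_mul_right hsum.le _).trans ENNReal.mul_div_le

end puncturedBallCutoff

end PuncturedBallCutoff

theorem cutoff_small_energy_general {X : Type*} [MetricSpace X] [MeasurableSpace X] [BorelSpace X]
    {μ : Measure X} {m p : ℝ} (hp : 0 < p) (hpm : p ≤ m) {C M : ℝ≥0} {Z : Set X} {x : X}
    (hvol : ∀ y ∈ Z, ∀ r : ℝ, 0 < r → r ≤ 1 → μ (ball y r) ≤ C * ENNReal.ofReal r ^ m)
    (hZc : ∀ ρ, IsCompact (Z ∩ closedBall x ρ)) (hZ : μH[m - p] Z = 0)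
    {f : X → ℝ≥0∞} (hf : AEMeasurable f μ) (hfM : ∀ᵐ y ∂μ, f y ≤ M) (hfint : ∫⁻ y, f y ∂μ ≠ ⊤)
    {η : ℝ≥0∞} (hη : η ≠ 0) {δ : ℝ} (hδ : 0 < δ) :
    ∃ (δ₁ : ℝ) (β : X → ℝ), 0 < δ₁ ∧ δ₁ ≤ δ ∧
      (∃ K : ℝ≥0, LipschitzWith K β) ∧
      (∀ y, 0 ≤ β y ∧ β y ≤ 1) ∧
      (∀ y, y ∉ ball x (1 / δ₁) \ {q | infDist q Z ≤ δ₁} → β y = 0) ∧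
      (∀ y ∈ ball x (1 / δ) \ {q | infDist q Z ≤ δ}, β y = 1) ∧
      ∫⁻ y, f y * ENNReal.ofReal (pointwiseLip β y) ^ p ∂μ ≤ η := by
  rcases Z.eq_empty_or_nonempty with rfl | hZne
  · -- `infDist y ∅ = 0`, so every point counts as `δ`-close to the empty set and `β = 0` works.
    have hLip (y : X) : pointwiseLip (fun _ : X => (0 : ℝ)) y = 0 :=
      pointwiseLip_eq_zero_of_eventually_eq (.of_forall fun _ => rfl)
    exact ⟨δ, 0, hδ, le_rfl, ⟨0, .const 0⟩, by simp, by simp, by simp [hδ.le],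
      by simp [Pi.zero_def, hLip, hp]⟩
  have hη2 : η / 2 ≠ 0 := (ENNReal.half_pos hη).ne'
  obtain ⟨L, hL, hLη⟩ := exists_pos_ofReal_rpow_neg_mul_le hp hfint hη2
  set R := 1 / δ
  obtain ⟨ι, _, z, r, hr, hz, hrδ, hcov, henergy⟩ :=
    puncturedBallCutoff.exists_cover_lintegral_mul_pointwiseLip_rpow_le (x := x) (R := R) hL hf hfM
      hp hpm (fun y hy => hvol y hy.1) (hZc (R + L + 1))
      (measure_mono_null Set.inter_subset_left hZ) (half_pos hδ) hη2
  obtain ⟨δ', hδ', hnear⟩ := exists_pos_forall_infDist_le_mem_of_isOpen hZne (hZc _)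
    (isOpen_iUnion fun _ => isOpen_ball) hcov
  have hRL : 0 < R + L := by positivity
  refine ⟨min δ (min δ' (1 / (R + L))), puncturedBallCutoff x R hL z hr, by positivity,
    min_le_left _ _, infThickenedIndicator.exists_lipschitzWith _ _,
    fun y => ⟨infThickenedIndicator.nonneg _ _ y, infThickenedIndicator.le_one _ _ y⟩,
    fun y hy => ?_, fun y hy => ?_, ?_⟩
  · refine puncturedBallCutoff.eq_zero_of_notMem_diff hL hr ?_ (fun q hq hqZ => ?_) hy
    · exact (le_one_div hRL (by positivity)).2 ((min_le_right _ _).trans (min_le_right _ _))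
    · exact hnear q hq (hqZ.trans ((min_le_right _ _).trans (min_le_left _ _)))
  · exact puncturedBallCutoff.eq_one_of_lt_infDist hL hr (fun i => (hz i).1) hrδ hy.1
      (not_le.1 hy.2)
  · calc _ ≤ ENNReal.ofReal L ^ (-p) * ∫⁻ y, f y ∂μ + η / 2 := henergy
      _ ≤ η / 2 + η / 2 := by gcongr
      _ = η := ENNReal.add_halves η

/-- Existence of a cut-off function with small weighted Dirichlet energy, supported away from a
closed set `Z` of vanishing `(m−2)`-dimensional Hausdorff measure. -/
theorem cutoff_small_energy {X : Type*} [MetricSpace X] [ProperSpace X]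
    [MeasurableSpace X] [BorelSpace X] (μ : Measure X)
    (m C₀ : ℝ) (hm : 2 < m) (hC₀ : 0 < C₀)
    (hvol : ∀ (y : X) (r : ℝ), 0 < r → r ≤ 1 →
      μ (Metric.ball y r) ≤ ENNReal.ofReal (C₀ * r ^ m))
    (Z : Set X) (hZclosed : IsClosed Z) (hZ : μH[m - 2] Z = 0)
    (f : X → ℝ) (hf_meas : Measurable f)
    (hf0 : ∀ x, 0 ≤ f x) (hf1 : ∀ x, f x ≤ 1)
    (hfint : ∫⁻ x, ENNReal.ofReal (f x) ∂μ ≤ 1)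
    (x : X) (η δ : ℝ) (hη : 0 < η) (hδ : 0 < δ) :
    ∃ (δ₁ : ℝ) (β : X → ℝ), 0 < δ₁ ∧ δ₁ ≤ δ ∧
      (∃ K : ℝ≥0, LipschitzWith K β) ∧
      (∀ y, 0 ≤ β y ∧ β y ≤ 1) ∧
      (∀ y, y ∉ Metric.ball x (1 / δ₁) \ {p | Metric.infDist p Z ≤ δ₁} → β y = 0) ∧
      (∀ y ∈ Metric.ball x (1 / δ) \ {p | Metric.infDist p Z ≤ δ}, β y = 1) ∧
      ∫⁻ y, ENNReal.ofReal (f y * (pointwiseLip β y) ^ 2) ∂μ ≤ ENNReal.ofReal η := by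
  have hvol' : ∀ y ∈ Z, ∀ r : ℝ, 0 < r → r ≤ 1 →
      μ (ball y r) ≤ C₀.toNNReal * ENNReal.ofReal r ^ m := fun y _ r hr0 hr1 =>
    (hvol y r hr0 hr1).trans_eq <| by
      rw [ENNReal.ofReal_mul hC₀.le, ENNReal.ofReal_rpow_of_pos hr0]; rfl
  simp only [ofReal_mul_pointwiseLip_sq]
  exact cutoff_small_energy_general zero_lt_two hm.le hvol'
    (fun ρ => (isCompact_closedBall x ρ).inter_left hZclosed) hZ hf_meas.ennreal_ofReal.aemeasurable
    (.of_forall fun y => ENNReal.ofReal_le_ofReal (hf1 y))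
    (ne_top_of_le_ne_top ENNReal.one_ne_top hfint) (ENNReal.ofReal_pos.2 hη).ne' hδ
end

section
/- Let (X, d) be a nonempty connected metric space and μ a Borel measure on X with total mass μ(X) ≤ V < ∞. Suppose there is a constant v > 0 such that μ(B(x, 1)) ≥ v for every x ∈ X. Then the diameter of X is finite and satisfies diam(X, d) ≤ 3·V/v. -/
open MeasureTheory

/-! On a connected space the function `dist x` takes every value between `0` and `dist x y`. As it
is `1`-Lipschitz, points at distances `0, 2r, 4r, …` from `x` are centers of disjoint balls of
radius `r`. If `2r n` is the last of these distances not exceeding `dist x y`, then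
`dist x y < 2r (n + 1)`, while the `n + 1` balls together have at most the total volume. -/

open Metric Set
open scoped ENNReal

theorem exists_dist_eq_of_le_dist {X : Type*} [PseudoMetricSpace X] [PreconnectedSpace X]
    {x y : X} {t : ℝ} (ht : 0 ≤ t) (hty : t ≤ dist x y) : ∃ p, dist x p = t :=
  intermediate_value_univ x y (continuous_const.dist continuous_id) ⟨by simpa using ht, hty⟩

theorem ball_disjoint_ball_of_add_le_abs_dist_sub_dist {X : Type*} [PseudoMetricSpace X]
    {x p q : X} {r s : ℝ} (h : r + s ≤ |dist x p - dist x q|) : Disjoint (ball p r) (ball q s) :=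
  ball_disjoint_ball <| h.trans <| by simpa only [dist_comm x] using abs_dist_sub_le p q x

theorem card_mul_le_measure_univ {α ι : Type*} [MeasurableSpace α] [Fintype ι] {μ : Measure α}
    {s : ι → Set α} {m : ℝ≥0∞} (hs : ∀ i, NullMeasurableSet (s i) μ)
    (hdisj : Pairwise (Function.onFun (AEDisjoint μ) s)) (hm : ∀ i, m ≤ μ (s i)) :
    Fintype.card ι * m ≤ μ univ :=
  calc
    Fintype.card ι * m = ∑ _i : ι, m := by simp
    _ ≤ ∑ i, μ (s i) := Finset.sum_le_sum fun i _ => hm i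
    _ ≤ μ univ := sum_measure_le_measure_univ (fun i _ => hs i) (hdisj.set_pairwise _)

section BallVolume

variable {X : Type*} [PseudoMetricSpace X] [PreconnectedSpace X]

theorem exists_pairwise_disjoint_ball {x y : X} {r : ℝ} (hr : 0 ≤ r) {n : ℕ}
    (hn : n * (2 * r) ≤ dist x y) :
    ∃ p : Fin (n + 1) → X, Pairwise (Function.onFun Disjoint fun k => ball (p k) r) := by
  have exists_center (k : Fin (n + 1)) : ∃ p, dist x p = k * (2 * r) := by
    refine exists_dist_eq_of_le_dist (by positivity) (le_trans ?_ hn)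
    gcongr
    exact k.is_le
  choose p hp using exists_center
  refine ⟨p, fun j k hjk => ball_disjoint_ball_of_add_le_abs_dist_sub_dist (x := x) ?_⟩
  calc
    r + r = 1 * (2 * r) := by ring
    _ ≤ |(j : ℝ) - k| * (2 * r) := by
      gcongr
      simpa only [← Nat.dist_cast_real, Real.dist_eq] using
        Nat.pairwise_one_le_dist (Fin.val_injective.ne hjk)
    _ = |dist x (p j) - dist x (p k)| := by
      rw [hp, hp, ← sub_mul, abs_mul, abs_of_nonneg (by positivity : 0 ≤ 2 * r)]

variable [MeasurableSpace X] [OpensMeasurableSpace X] {μ : Measure X} {r : ℝ}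

theorem edist_mul_le_of_le_measure_ball {m : ℝ≥0∞} (hr : 0 < r) (hball : ∀ x, m ≤ μ (ball x r))
    (x y : X) : edist x y * m ≤ ENNReal.ofReal (2 * r) * μ univ := by
  set n := ⌊dist x y / (2 * r)⌋₊
  have le_dist : n * (2 * r) ≤ dist x y :=
    (le_div_iff₀ (by positivity)).mp (Nat.floor_le (by positivity))
  have dist_le : dist x y ≤ (n + 1 : ℕ) * (2 * r) := by
    rw [← div_le_iff₀ (by positivity), Nat.cast_succ]
    exact (Nat.lt_floor_add_one _).le
  obtain ⟨p, hp⟩ := exists_pairwise_disjoint_ball hr.le le_dist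
  have packing : (n + 1 : ℕ) * m ≤ μ univ := by
    simpa only [Fintype.card_fin] using
      card_mul_le_measure_univ (fun _ => measurableSet_ball.nullMeasurableSet)
        (hp.mono fun _ _ h => h.aedisjoint) fun k => hball (p k)
  calc
    edist x y * m ≤ ENNReal.ofReal ((n + 1 : ℕ) * (2 * r)) * m := by
      rw [edist_dist]
      gcongr
    _ = ENNReal.ofReal (2 * r) * ((n + 1 : ℕ) * m) := by
      rw [ENNReal.ofReal_mul (Nat.cast_nonneg _), ENNReal.ofReal_natCast]
      ring
    _ ≤ ENNReal.ofReal (2 * r) * μ univ := by gcongr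

theorem diam_le_of_unit_ball_volume_general {v : ℝ} (hr : 0 < r) (hv : 0 < v)
    (hball : ∀ x, ENNReal.ofReal v ≤ μ (ball x r)) :
    ediam (univ : Set X) ≤ ENNReal.ofReal (2 * r / v) * μ univ := by
  refine ediam_le fun x _ y _ => ?_
  rw [ENNReal.ofReal_div_of_pos hv, ← ENNReal.mul_div_right_comm,
    ENNReal.le_div_iff_mul_le (.inl (by simpa using hv)) (.inl ENNReal.ofReal_ne_top)]
  exact edist_mul_le_of_le_measure_ball hr hball x y

end BallVolume

/-- If a connected metric space carries a Borel measure of total mass at most `V` whose unit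
balls all have measure at least `v > 0`, then its diameter is finite and at most `3V/v`. -/
theorem diam_le_of_unit_ball_volume {X : Type*} [MetricSpace X] [Nonempty X] [ConnectedSpace X]
    [MeasurableSpace X] [BorelSpace X] (μ : Measure X)
    (V v : ℝ) (hv : 0 < v)
    (hμV : μ Set.univ ≤ ENNReal.ofReal V)
    (hball : ∀ x : X, ENNReal.ofReal v ≤ μ (Metric.ball x 1)) :
    EMetric.diam (Set.univ : Set X) ≤ ENNReal.ofReal (3 * V / v) := by
  calc
    ediam (univ : Set X) ≤ ENNReal.ofReal (2 * 1 / v) * μ univ :=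
      diam_le_of_unit_ball_volume_general one_pos hv hball
    _ ≤ ENNReal.ofReal (3 / v) * ENNReal.ofReal V := by gcongr; norm_num
    _ = ENNReal.ofReal (3 * V / v) := by
      rw [← ENNReal.ofReal_mul (by positivity), div_mul_eq_mul_div]
end
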